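/- arXiv:1609.08743 — 2 statements merged into one kernel-verified Lean document; each statement's English description precedes it below -/
import Mathlib

section
/- Let a₀ ∈ (0,1) be the minimal root of 4a(2−a)(1−a)²(a²−2a+2)² = 1. Let a ∈ [a₀, 1), let c, d > 0 with 0 < c/d ≤ ((a−1)² + 1)/(2(a−1)² + 1), let δ₂ = (√(c/d) − 1)(1−a) < 0, and let δ ∈ (a−1, δ₂]. Then the function G₁(x) = [F(a−1−δ, 1−a+δ; 1; 1−x^d) − F(a−1, 1−a; 1; 1−x^c)]/(1−x^c) is strictly decreasing on (0,1) and maps (0,1) onto (C₃(δ), C₄(δ)), where C₃(δ) = −(d/c)·(δ² + 2(1−a)δ + (1−a)²(1 − c/d)) ≥ 0 and C₄(δ) = (1/π)·[sin(π(a−δ))/(1−a+δ) − sin(πa)/(1−a)]. -/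
open Real Set Filter Topology

/-- The Gaussian hypergeometric function `F(a,b;c;x)`, defined as a power series
with Pochhammer (shifted factorial) coefficients. -/
noncomputable def hyp (a b c x : ℝ) : ℝ :=
  ∑' n : ℕ, ((∏ i ∈ Finset.range n, (a + i)) * (∏ i ∈ Finset.range n, (b + i)) /
    ((∏ i ∈ Finset.range n, (c + i)) * (Nat.factorial n))) * x ^ n

/-- The sum of the real power series with coefficients `c`. -/
noncomputable def seriesSum (c : ℕ → ℝ) (x : ℝ) : ℝ := ∑' n, c n * x ^ n

lemma summable_mul_pow_of_abs_le {c : ℕ → ℝ} {M x : ℝ} (hc : ∀ n, |c n| ≤ M) (hx : |x| < 1) :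
    Summable fun n => c n * x ^ n := by
  refine Summable.of_norm_bounded (g := fun n => M * |x| ^ n)
    ((summable_geometric_of_lt_one (abs_nonneg x) hx).mul_left M) fun n => ?_
  rw [Real.norm_eq_abs, abs_mul, abs_pow]
  gcongr
  exact hc n

lemma hasDerivAt_seriesSum {c : ℕ → ℝ} {M x : ℝ} (hc : ∀ n, |c n| ≤ M) (hx : |x| < 1) :
    HasDerivAt (seriesSum c) (seriesSum (fun n => (n + 1) * c (n + 1)) x) x := by
  obtain ⟨ρ, hxρ, hρ⟩ := exists_between hx
  have hρ0 : 0 < ρ := (abs_nonneg x).trans_lt hxρ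
  have hs : Summable fun n : ℕ => M * (n * ρ ^ (n - 1)) := by
    refine ((summable_nat_add_iff 1).1 ?_).mul_left M
    have h1 := summable_pow_mul_geometric_of_norm_lt_one 1 (r := ρ)
      (by rwa [Real.norm_eq_abs, abs_of_pos hρ0])
    have h2 := summable_geometric_of_lt_one hρ0.le hρ
    refine (h1.add h2).congr fun n => ?_
    simp; ring
  have hbd : ∀ n : ℕ, ∀ y ∈ Ioo (-ρ) ρ, ‖c n * (n * y ^ (n - 1))‖ ≤ M * (n * ρ ^ (n - 1)) := by
    intro n y hy
    rw [Real.norm_eq_abs, abs_mul, abs_mul, abs_pow, Nat.abs_cast]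
    have := abs_lt.2 hy
    have hM := (abs_nonneg _).trans (hc n)
    gcongr
    exact hc n
  have hxm : x ∈ Ioo (-ρ) ρ := abs_lt.1 hxρ
  have key := hasDerivAt_tsum_of_isPreconnected (𝕜 := ℝ) (g := fun n y => c n * y ^ n)
    (g' := fun n y => c n * (n * y ^ (n - 1))) hs isOpen_Ioo isPreconnected_Ioo
    (fun n y _ => (hasDerivAt_pow n y).const_mul (c n)) hbd
    hxm (summable_mul_pow_of_abs_le hc hx) hxm
  convert! key using 1
  have hsum := Summable.of_norm_bounded hs (fun n => hbd n x hxm)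
  rw [hsum.tsum_eq_zero_add, seriesSum]
  simp only [Nat.cast_zero, zero_mul, mul_zero, zero_add, Nat.add_sub_cancel]
  exact tsum_congr fun n => by push_cast; ring

lemma one_sub_mul_seriesSum {c e : ℕ → ℝ} {M x : ℝ} (hc : ∀ n, |c n| ≤ M) (hx : |x| < 1)
    (h0 : e 0 = c 0) (h : ∀ n, e (n + 1) = c (n + 1) - c n) :
    (1 - x) * seriesSum c x = seriesSum e x := by
  have hs := summable_mul_pow_of_abs_le hc hx
  have he : Summable fun n => e n * x ^ n := by
    refine summable_mul_pow_of_abs_le (M := 2 * M) (fun n => ?_) hx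
    have h1 := (abs_nonneg _).trans (hc 0)
    rcases n with _ | n
    · rw [h0]; linarith [hc 0]
    · rw [h]; linarith [abs_sub (c (n + 1)) (c n), hc n, hc (n + 1)]
  unfold seriesSum
  rw [he.tsum_eq_zero_add, sub_mul, one_mul, ← tsum_mul_left,
    sub_eq_iff_eq_add, add_assoc, ← Summable.tsum_add ((summable_nat_add_iff 1).2 he)
    (hs.mul_left x), hs.tsum_eq_zero_add, h0]
  congr 1
  refine tsum_congr fun n => ?_
  rw [h]; ring

lemma mul_seriesSum_derivCoeff {c : ℕ → ℝ} {M x : ℝ} (hc : ∀ n, |n * c n| ≤ M) (hx : |x| < 1) :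
    x * seriesSum (fun n => (n + 1) * c (n + 1)) x = seriesSum (fun n => n * c n) x := by
  have hs := summable_mul_pow_of_abs_le hc hx
  unfold seriesSum
  rw [hs.tsum_eq_zero_add, ← tsum_mul_left]
  simp only [Nat.cast_zero, zero_mul, zero_add]
  exact tsum_congr fun n => by push_cast; ring

lemma seriesSum_zero (c : ℕ → ℝ) : seriesSum c 0 = c 0 := by
  unfold seriesSum
  rw [tsum_eq_single 0 (by intro n hn; simp [hn])]
  simp

lemma seriesSum_le {c e : ℕ → ℝ} {M N x : ℝ} (hc : ∀ n, |c n| ≤ M) (he : ∀ n, |e n| ≤ N)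
    (h : ∀ n, c n ≤ e n) (hx0 : 0 ≤ x) (hx : x < 1) : seriesSum c x ≤ seriesSum e x := by
  have hx' : |x| < 1 := by rwa [abs_of_nonneg hx0]
  exact (summable_mul_pow_of_abs_le hc hx').tsum_le_tsum
    (fun n => mul_le_mul_of_nonneg_right (h n) (pow_nonneg hx0 n))
    (summable_mul_pow_of_abs_le he hx')

/-- The partial product `∏ (1 - s / k²)`, `1 ≤ k ≤ n`, of Euler's sine product. -/
noncomputable def eulerProd (s : ℝ) (n : ℕ) : ℝ :=
  ∏ i ∈ Finset.range n, (1 - s / ((i : ℝ) + 1) ^ 2)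

lemma eulerProd_succ (s : ℝ) (n : ℕ) :
    eulerProd s (n + 1) = eulerProd s n * (1 - s / ((n : ℝ) + 1) ^ 2) := by
  simp [eulerProd, Finset.prod_range_succ]

lemma eulerProd_factor_nonneg {s : ℝ} (hs1 : s ≤ 1) (n : ℕ) :
    0 ≤ 1 - s / ((n : ℝ) + 1) ^ 2 := by
  rw [sub_nonneg, div_le_one (by positivity)]
  have : (0 : ℝ) ≤ n := n.cast_nonneg
  nlinarith

lemma eulerProd_nonneg {s : ℝ} (hs1 : s ≤ 1) (n : ℕ) : 0 ≤ eulerProd s n :=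
  Finset.prod_nonneg fun i _ => eulerProd_factor_nonneg hs1 i

lemma eulerProd_le_one {s : ℝ} (hs : 0 ≤ s) (hs1 : s ≤ 1) (n : ℕ) : eulerProd s n ≤ 1 :=
  Finset.prod_le_one (fun i _ => eulerProd_factor_nonneg hs1 i)
    fun i _ => sub_le_self _ (by positivity)

lemma eulerProd_zero_left (n : ℕ) : eulerProd 0 n = 1 := by simp [eulerProd]

lemma eulerProd_one_succ (n : ℕ) : eulerProd 1 (n + 1) = 0 :=
  Finset.prod_eq_zero (Finset.mem_range.2 n.succ_pos) (by norm_num)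

/-- The coefficients of `F(-p, p; 1; x)` in terms of `s = p²`. -/
noncomputable def coeffF (s : ℝ) : ℕ → ℝ
  | 0 => 1
  | n + 1 => -s / ((n : ℝ) + 1) ^ 2 * eulerProd s n

/-- The coefficients of `F(1 - p, 1 + p; 2; x)` in terms of `s = p²`. -/
noncomputable def coeffB (s : ℝ) (n : ℕ) : ℝ := eulerProd s n / (n + 1)

/-- The coefficients of `F(1 - p, 1 + p; 3; x)` in terms of `s = p²`. -/
noncomputable def coeffA (s : ℝ) (n : ℕ) : ℝ := 2 * eulerProd s n / ((n + 1) * (n + 2))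

lemma hyp_neg_eq_seriesSum (p x : ℝ) : hyp (-p) p 1 x = seriesSum (coeffF (p ^ 2)) x := by
  unfold hyp seriesSum
  refine tsum_congr fun n => ?_
  congr 1
  rcases n with _ | n
  · simp [coeffF]
  induction n with
  | zero => simp [coeffF, eulerProd]; ring
  | succ n ih =>
    rw [Finset.prod_range_succ, Finset.prod_range_succ _ (n + 1),
      Finset.prod_range_succ _ (n + 1), Nat.factorial_succ]
    simp only [coeffF] at ih ⊢
    rw [eulerProd_succ]
    have hn : (n : ℝ) + 1 ≠ 0 := by positivity
    have hn2 : (n : ℝ) + 1 + 1 ≠ 0 := by positivity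
    have hn3 : 1 + ((n : ℝ) + 1) ≠ 0 := by positivity
    have e : ∀ A B C D : ℝ, A * (-p + ((n + 1 : ℕ) : ℝ)) * (B * (p + ((n + 1 : ℕ) : ℝ))) /
        (C * (1 + ((n + 1 : ℕ) : ℝ)) * (((n + 1 + 1 : ℕ) : ℝ) * D)) =
        A * B / (C * D) * ((((n : ℝ) + 1) ^ 2 - p ^ 2) / ((n : ℝ) + 1 + 1) ^ 2) := by
      intro A B C D
      rw [div_mul_div_comm]
      push_cast
      congr 1 <;> ring
    push_cast at e ih ⊢
    rw [e, ih]
    field_simp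

lemma sum_range_coeffF (s : ℝ) (n : ℕ) :
    ∑ i ∈ Finset.range (n + 1), coeffF s i = eulerProd s n := by
  induction n with
  | zero => simp [coeffF, eulerProd]
  | succ n ih => rw [Finset.sum_range_succ, ih, eulerProd_succ, coeffF]; ring

lemma tendsto_seriesSum_coeffF {p : ℝ} (hp : p ≠ 0) :
    Tendsto (seriesSum (coeffF (p ^ 2))) (𝓝[<] 1) (𝓝 (sin (π * p) / (π * p))) := by
  refine Real.tendsto_tsum_powerSeries_nhdsWithin_lt ((tendsto_add_atTop_iff_nat 1).1 ?_)
  simp_rw [sum_range_coeffF]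
  have hp' : π * p ≠ 0 := mul_ne_zero pi_ne_zero hp
  refine ((Real.tendsto_euler_sin_prod p).div_const (π * p)).congr fun n => ?_
  rw [mul_div_cancel_left₀ _ hp', eulerProd]

lemma abs_coeffB_le {s : ℝ} (hs : 0 ≤ s) (hs1 : s ≤ 1) (n : ℕ) : |coeffB s n| ≤ 1 := by
  have h0 := eulerProd_nonneg hs1 n
  have h1 := eulerProd_le_one hs hs1 n
  have hn : (0 : ℝ) ≤ n := n.cast_nonneg
  rw [coeffB, abs_of_nonneg (by positivity), div_le_one (by positivity)]
  linarith

lemma coeffA_nonneg {s : ℝ} (hs1 : s ≤ 1) (n : ℕ) : 0 ≤ coeffA s n := by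
  have h0 := eulerProd_nonneg hs1 n
  unfold coeffA
  positivity

lemma coeffA_le_coeffB {s : ℝ} (hs1 : s ≤ 1) (n : ℕ) : coeffA s n ≤ coeffB s n := by
  have h0 := eulerProd_nonneg hs1 n
  have hn : (0 : ℝ) ≤ n := n.cast_nonneg
  rw [coeffA, coeffB, div_le_div_iff₀ (by positivity) (by positivity)]
  nlinarith [mul_nonneg (mul_nonneg h0 hn) (by positivity : (0 : ℝ) ≤ n + 1)]

lemma abs_coeffA_le {s : ℝ} (hs : 0 ≤ s) (hs1 : s ≤ 1) (n : ℕ) : |coeffA s n| ≤ 1 := by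
  rw [abs_of_nonneg (coeffA_nonneg hs1 n)]
  exact (coeffA_le_coeffB hs1 n).trans ((le_abs_self _).trans (abs_coeffB_le hs hs1 n))

lemma abs_mul_coeffA_le {s : ℝ} (hs : 0 ≤ s) (hs1 : s ≤ 1) (n : ℕ) : |n * coeffA s n| ≤ 2 := by
  have h0 := eulerProd_nonneg hs1 n
  have h1 := eulerProd_le_one hs hs1 n
  have hn : (0 : ℝ) ≤ n := n.cast_nonneg
  rw [abs_of_nonneg (mul_nonneg hn (coeffA_nonneg hs1 n)), coeffA, mul_div_assoc',
    div_le_iff₀ (by positivity)]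
  nlinarith [mul_le_mul_of_nonneg_left h1 hn]

lemma abs_coeffF_le {s : ℝ} (hs : 0 ≤ s) (hs1 : s ≤ 1) (n : ℕ) : |coeffF s n| ≤ 1 := by
  rcases n with _ | n
  · simp [coeffF]
  have h0 := eulerProd_nonneg hs1 n
  have h1 := eulerProd_le_one hs hs1 n
  rw [coeffF, abs_mul, abs_of_nonneg h0, neg_div, abs_neg, abs_of_nonneg (by positivity)]
  exact mul_le_one₀ (sub_nonneg.1 (eulerProd_factor_nonneg hs1 n)) h0 h1

lemma hasDerivAt_seriesSum_coeffF {s x : ℝ} (hs : 0 ≤ s) (hs1 : s ≤ 1) (hx : |x| < 1) :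
    HasDerivAt (seriesSum (coeffF s)) (-s * seriesSum (coeffB s) x) x := by
  convert hasDerivAt_seriesSum (abs_coeffF_le hs hs1) hx using 1
  unfold seriesSum
  rw [← tsum_mul_left]
  refine tsum_congr fun n => ?_
  simp only [coeffF, coeffB]
  field_simp

lemma hasDerivAt_seriesSum_coeffB {s x : ℝ} (hs : 0 ≤ s) (hs1 : s ≤ 1) (hx : |x| < 1) :
    HasDerivAt (seriesSum (coeffB s)) ((1 - s) / 2 * seriesSum (coeffA s) x / (1 - x)) x := by
  convert hasDerivAt_seriesSum (abs_coeffB_le hs hs1) hx using 1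
  have hx1 : 0 < 1 - x := by linarith [(abs_lt.1 hx).2]
  have hbd : ∀ n : ℕ, |((n : ℝ) + 1) * coeffB s (n + 1)| ≤ 1 := by
    intro n
    have h0 := eulerProd_nonneg hs1 (n + 1)
    have h1 := eulerProd_le_one hs hs1 (n + 1)
    have hn : (0 : ℝ) ≤ n := n.cast_nonneg
    rw [coeffB]
    push_cast
    rw [abs_of_nonneg (by positivity), mul_div_assoc', div_le_one (by positivity)]
    nlinarith
  rw [div_eq_iff hx1.ne', mul_comm _ (1 - x),
    one_sub_mul_seriesSum (e := fun n => (1 - s) / 2 * coeffA s n) hbd hx]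
  · unfold seriesSum
    rw [← tsum_mul_left]
    exact tsum_congr fun n => by ring
  · simp [coeffA, coeffB, eulerProd]; ring
  · intro n
    simp only [coeffA, coeffB, eulerProd_succ]
    push_cast
    field_simp
    ring

lemma hasDerivAt_seriesSum_coeffA {s x : ℝ} (hs : 0 ≤ s) (hs1 : s ≤ 1) (hx0 : 0 < x)
    (hx : x < 1) :
    HasDerivAt (seriesSum (coeffA s))
      (2 * (seriesSum (coeffB s) x - seriesSum (coeffA s) x) / x) x := by
  have hx' : |x| < 1 := by rwa [abs_of_pos hx0]
  convert hasDerivAt_seriesSum (abs_coeffA_le hs hs1) hx' using 1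
  rw [div_eq_iff hx0.ne', mul_comm _ x, mul_seriesSum_derivCoeff (abs_mul_coeffA_le hs hs1) hx']
  unfold seriesSum
  rw [← (summable_mul_pow_of_abs_le (abs_coeffB_le hs hs1) hx').tsum_sub
    (summable_mul_pow_of_abs_le (abs_coeffA_le hs hs1) hx'), ← tsum_mul_left]
  refine tsum_congr fun n => ?_
  simp only [coeffA, coeffB]
  field_simp
  ring

lemma seriesSum_coeffA_le_coeffB {s x : ℝ} (hs : 0 ≤ s) (hs1 : s ≤ 1) (hx0 : 0 ≤ x)
    (hx : x < 1) : seriesSum (coeffA s) x ≤ seriesSum (coeffB s) x :=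
  seriesSum_le (abs_coeffA_le hs hs1) (abs_coeffB_le hs hs1) (coeffA_le_coeffB hs1) hx0 hx

lemma seriesSum_coeffA_lt_coeffB {s x : ℝ} (hs : 0 ≤ s) (hs1 : s < 1) (hx0 : 0 < x)
    (hx : x < 1) : seriesSum (coeffA s) x < seriesSum (coeffB s) x := by
  have hx' : |x| < 1 := by rwa [abs_of_pos hx0]
  refine Summable.tsum_lt_tsum (i := 1)
    (fun n => mul_le_mul_of_nonneg_right (coeffA_le_coeffB hs1.le n) (pow_nonneg hx0.le n)) ?_
    (summable_mul_pow_of_abs_le (abs_coeffA_le hs hs1.le) hx')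
    (summable_mul_pow_of_abs_le (abs_coeffB_le hs hs1.le) hx')
  simp only [coeffA, coeffB, eulerProd, Finset.prod_range_one, pow_one]
  refine mul_lt_mul_of_pos_right ?_ hx0
  norm_num
  linarith

lemma one_le_seriesSum_coeffA {s x : ℝ} (hs : 0 ≤ s) (hs1 : s ≤ 1) (hx0 : 0 ≤ x)
    (hx : x < 1) : 1 ≤ seriesSum (coeffA s) x := by
  have hx' : |x| < 1 := by rwa [abs_of_nonneg hx0]
  have h := (summable_mul_pow_of_abs_le (abs_coeffA_le hs hs1) hx').le_tsum 0
    fun n _ => mul_nonneg (coeffA_nonneg hs1 n) (pow_nonneg hx0 n)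
  rw [pow_zero, mul_one] at h
  exact (by simp [coeffA, eulerProd] : (1 : ℝ) = coeffA s 0).trans_le h

lemma seriesSum_coeffA_le_zero_left {s x : ℝ} (hs : 0 ≤ s) (hs1 : s ≤ 1) (hx0 : 0 ≤ x)
    (hx : x < 1) : seriesSum (coeffA s) x ≤ seriesSum (coeffA 0) x := by
  refine seriesSum_le (abs_coeffA_le hs hs1) (abs_coeffA_le le_rfl zero_le_one) (fun n => ?_) hx0 hx
  rw [coeffA, coeffA, eulerProd_zero_left]
  gcongr
  exact eulerProd_le_one hs hs1 n

lemma seriesSum_coeffA_one (x : ℝ) : seriesSum (coeffA 1) x = 1 := by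
  unfold seriesSum
  rw [tsum_eq_single 0]
  · simp [coeffA, eulerProd]
  · intro n hn
    obtain ⟨m, rfl⟩ := Nat.exists_eq_succ_of_ne_zero hn
    rw [coeffA, Nat.succ_eq_add_one, eulerProd_one_succ]
    simp

lemma continuousOn_seriesSum {c : ℕ → ℝ} {M : ℝ} (hc : ∀ n, |c n| ≤ M) :
    ContinuousOn (seriesSum c) (Ico 0 1) := fun _ hx =>
  (hasDerivAt_seriesSum hc (abs_lt.2 ⟨by linarith [hx.1], hx.2⟩)).continuousAt.continuousWithinAt

lemma wronskian_coeffA_coeffB_le {s u : ℝ} (hs : 0 ≤ s) (hs1 : s ≤ 1) (hu0 : 0 < u) (hu : u < 1) :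
    seriesSum (coeffB 0) u * seriesSum (coeffA s) u -
        seriesSum (coeffA 0) u * seriesSum (coeffB s) u ≤
      s / 6 * (u / (1 - u)) * (seriesSum (coeffA 0) u * seriesSum (coeffA s) u) := by
  set A₀ := seriesSum (coeffA 0)
  set B₀ := seriesSum (coeffB 0)
  set A := seriesSum (coeffA s)
  set B := seriesSum (coeffB s)
  have hmono : MonotoneOn
      (fun t => s / 6 * t ^ 3 * (A₀ t * A t) / (1 - t) - t ^ 2 * (B₀ t * A t - A₀ t * B t))
      (Ico 0 1) := by
    refine monotoneOn_of_hasDerivWithinAt_nonneg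
      (f' := fun t => s / 6 * t ^ 3 *
        ((2 * (B₀ t - A₀ t) / t * A t + A₀ t * (2 * (B t - A t) / t)) / (1 - t) +
          A₀ t * A t / (1 - t) ^ 2)) (convex_Ico 0 1) ?_ ?_ ?_
    · have h1 : ContinuousOn A₀ (Ico 0 1) :=
        continuousOn_seriesSum (abs_coeffA_le le_rfl zero_le_one)
      have h2 : ContinuousOn B₀ (Ico 0 1) :=
        continuousOn_seriesSum (abs_coeffB_le le_rfl zero_le_one)
      have h3 : ContinuousOn A (Ico 0 1) := continuousOn_seriesSum (abs_coeffA_le hs hs1)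
      have h4 : ContinuousOn B (Ico 0 1) := continuousOn_seriesSum (abs_coeffB_le hs hs1)
      have h5 : ∀ t ∈ Ico (0 : ℝ) 1, 1 - t ≠ 0 := fun t ht => (sub_pos.2 ht.2).ne'
      fun_prop (disch := assumption)
    · intro t ht
      rw [interior_Ico] at ht
      have ht' : |t| < 1 := by rw [abs_of_pos ht.1]; exact ht.2
      have h1 : HasDerivAt A₀ (2 * (B₀ t - A₀ t) / t) t :=
        hasDerivAt_seriesSum_coeffA le_rfl zero_le_one ht.1 ht.2
      have h2 : HasDerivAt B₀ ((1 - 0) / 2 * A₀ t / (1 - t)) t :=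
        hasDerivAt_seriesSum_coeffB le_rfl zero_le_one ht'
      have h3 : HasDerivAt A (2 * (B t - A t) / t) t := hasDerivAt_seriesSum_coeffA hs hs1 ht.1 ht.2
      have h4 : HasDerivAt B ((1 - s) / 2 * A t / (1 - t)) t :=
        hasDerivAt_seriesSum_coeffB hs hs1 ht'
      have ht0 : t ≠ 0 := ht.1.ne'
      have ht1 : 1 - t ≠ 0 := (sub_pos.2 ht.2).ne'
      have key := ((((hasDerivAt_pow 3 t).const_mul (s / 6)).mul (h1.mul h3)).div
        ((hasDerivAt_id t).const_sub 1) ht1).sub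
          ((hasDerivAt_pow 2 t).mul ((h2.mul h3).sub (h1.mul h4)))
      refine (key.congr_deriv ?_).hasDerivWithinAt
      simp only [id, Pi.mul_apply, Pi.sub_apply]
      push_cast
      field_simp
      ring
    · intro t ht
      rw [interior_Ico] at ht
      have ht1 : 0 < 1 - t := sub_pos.2 ht.2
      have ht0 := ht.1
      have h1 : 0 ≤ B₀ t - A₀ t :=
        sub_nonneg.2 (seriesSum_coeffA_le_coeffB le_rfl zero_le_one ht.1.le ht.2)
      have h2 : 0 ≤ B t - A t := sub_nonneg.2 (seriesSum_coeffA_le_coeffB hs hs1 ht.1.le ht.2)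
      have h3 : 0 ≤ A₀ t :=
        zero_le_one.trans (one_le_seriesSum_coeffA le_rfl zero_le_one ht.1.le ht.2)
      have h4 : 0 ≤ A t := zero_le_one.trans (one_le_seriesSum_coeffA hs hs1 ht.1.le ht.2)
      positivity
  have h := hmono ⟨le_rfl, zero_lt_one⟩ ⟨hu0.le, hu⟩ hu0.le
  simp only [ne_eq, OfNat.ofNat_ne_zero, not_false_eq_true, zero_pow, mul_zero, zero_mul, zero_div,
    sub_zero] at h
  have e : s / 6 * u ^ 3 * (A₀ u * A u) / (1 - u) =
      u ^ 2 * (s / 6 * (u / (1 - u)) * (A₀ u * A u)) := by ring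
  rw [e, ← mul_sub] at h
  linarith [nonneg_of_mul_nonneg_right h (by positivity)]

/-- In terms of the functions `F(1 - p, 1 + p; 3; u)` with `s = p²`, the quotient of the one for `s`
by `(1 - u) ^ (s / 3)` times the one for `0` is increasing. -/
lemma monotoneOn_log_seriesSum_coeffA {s : ℝ} (hs : 0 ≤ s) (hs1 : s ≤ 1) :
    MonotoneOn (fun u => log (seriesSum (coeffA s) u) - log (seriesSum (coeffA 0) u) -
      s / 3 * log (1 - u)) (Ico 0 1) := by
  have hpos : ∀ {σ : ℝ}, 0 ≤ σ → σ ≤ 1 → ∀ u ∈ Ico (0 : ℝ) 1, 0 < seriesSum (coeffA σ) u :=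
    fun h h' u hu => zero_lt_one.trans_le (one_le_seriesSum_coeffA h h' hu.1 hu.2)
  refine monotoneOn_of_hasDerivWithinAt_nonneg
    (f' := fun u => 2 * (seriesSum (coeffB s) u - seriesSum (coeffA s) u) / u /
        seriesSum (coeffA s) u -
      2 * (seriesSum (coeffB 0) u - seriesSum (coeffA 0) u) / u / seriesSum (coeffA 0) u -
      s / 3 * (-1 / (1 - u))) (convex_Ico 0 1) ?_ ?_ ?_
  · refine (((continuousOn_seriesSum (abs_coeffA_le hs hs1)).log
      fun u hu => (hpos hs hs1 u hu).ne').sub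
      ((continuousOn_seriesSum (abs_coeffA_le le_rfl zero_le_one)).log
      fun u hu => (hpos le_rfl zero_le_one u hu).ne')).sub
      (ContinuousOn.mul continuousOn_const (ContinuousOn.log (by fun_prop)
      fun u hu => (sub_pos.2 hu.2).ne'))
  · intro u hu
    rw [interior_Ico] at hu
    have hu' := Ioo_subset_Ico_self hu
    exact ((((hasDerivAt_seriesSum_coeffA hs hs1 hu.1 hu.2).log (hpos hs hs1 u hu').ne').sub
      ((hasDerivAt_seriesSum_coeffA le_rfl zero_le_one hu.1 hu.2).log
        (hpos le_rfl zero_le_one u hu').ne')).sub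
      ((((hasDerivAt_id u).const_sub 1).log
        (sub_pos.2 hu.2).ne').const_mul (s / 3))).hasDerivWithinAt
  · intro u hu
    rw [interior_Ico] at hu
    have hu' := Ioo_subset_Ico_self hu
    have h1 := hpos hs hs1 u hu'
    have h2 := hpos le_rfl zero_le_one u hu'
    have hu0 := hu.1
    have hu1 : 0 < 1 - u := sub_pos.2 hu.2
    have hW := wronskian_coeffA_coeffB_le hs hs1 hu.1 hu.2
    set A₀ := seriesSum (coeffA 0) u
    set B₀ := seriesSum (coeffB 0) u
    set A := seriesSum (coeffA s) u
    set B := seriesSum (coeffB s) u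
    have e : 2 * (B - A) / u / A - 2 * (B₀ - A₀) / u / A₀ - s / 3 * (-1 / (1 - u)) =
        2 / (u * A * A₀) * (s / 6 * (u / (1 - u)) * (A₀ * A) - (B₀ * A - A₀ * B)) := by
      field_simp
      ring
    rw [e]
    exact mul_nonneg (by positivity) (sub_nonneg.2 hW)

lemma rpow_mul_seriesSum_coeffA_le {s σ r y : ℝ} (hs : 0 ≤ s) (hs1 : s ≤ 1) (hσ : 0 ≤ σ)
    (hσ1 : σ ≤ 1) (hr : 1 ≤ r) (hrs : s ≤ 2 * (r - 1)) (hy0 : 0 < y) (hy : y < 1) :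
    y ^ (r - 1) * seriesSum (coeffA σ) (1 - y ^ r) ≤ seriesSum (coeffA s) (1 - y) := by
  have hw0 : 0 < y ^ r := rpow_pos_of_pos hy0 r
  have hwy : y ^ r ≤ y := by
    simpa using rpow_le_rpow_of_exponent_ge hy0 hy.le hr
  have hu : 1 - y ∈ Ico (0 : ℝ) 1 := ⟨by linarith, by linarith⟩
  have hv : 1 - y ^ r ∈ Ico (0 : ℝ) 1 := ⟨by linarith, by linarith⟩
  have hlog : log y < 0 := log_neg hy0 hy
  have h1 := monotoneOn_log_seriesSum_coeffA zero_le_one le_rfl hu hv (by linarith)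
  have h2 := monotoneOn_log_seriesSum_coeffA hs hs1 ⟨le_rfl, zero_lt_one⟩ hu hu.1
  have hA : ∀ {τ : ℝ}, 0 ≤ τ → τ ≤ 1 → ∀ u ∈ Ico (0 : ℝ) 1, 0 < seriesSum (coeffA τ) u :=
    fun h h' u hu => zero_lt_one.trans_le (one_le_seriesSum_coeffA h h' hu.1 hu.2)
  have h3 : log (seriesSum (coeffA σ) (1 - y ^ r)) ≤ log (seriesSum (coeffA 0) (1 - y ^ r)) :=
    log_le_log (hA hσ hσ1 _ hv) (seriesSum_coeffA_le_zero_left hσ hσ1 hv.1 hv.2)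
  simp only [seriesSum_coeffA_one, sub_sub_cancel, log_rpow hy0, seriesSum_zero] at h1 h2
  have h0 : ∀ τ, coeffA τ 0 = 1 := fun τ => by simp [coeffA, eulerProd]
  simp only [h0, log_one, sub_zero, mul_zero] at h1 h2
  have hp : 0 < y ^ (r - 1) := rpow_pos_of_pos hy0 _
  refine (log_le_log_iff (mul_pos hp (hA hσ hσ1 _ hv)) (hA hs hs1 _ hu)).1 ?_
  rw [log_mul hp.ne' (hA hσ hσ1 _ hv).ne', log_rpow hy0]
  nlinarith [mul_nonneg (sub_nonneg.2 hrs) (neg_nonneg.2 hlog.le)]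

/-- Minus the derivative of `y ↦ F(-q, q; 1; 1 - y ^ r) - F(-p, p; 1; 1 - y)`, where `s = p²` and
`σ = q²`. -/
noncomputable def negDerivDiff (s σ r y : ℝ) : ℝ :=
  s * seriesSum (coeffB s) (1 - y) - r * σ * (y ^ (r - 1) * seriesSum (coeffB σ) (1 - y ^ r))

lemma hasDerivAt_diff {s σ r y : ℝ} (hs : 0 ≤ s) (hs1 : s ≤ 1) (hσ : 0 ≤ σ) (hσ1 : σ ≤ 1)
    (hr : 1 ≤ r) (hy0 : 0 < y) (hy : y ≤ 1) :
    HasDerivAt (fun t => seriesSum (coeffF σ) (1 - t ^ r) - seriesSum (coeffF s) (1 - t))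
      (-negDerivDiff s σ r y) y := by
  have hw0 : 0 < y ^ r := rpow_pos_of_pos hy0 r
  have hw1 : y ^ r ≤ 1 := rpow_le_one hy0.le hy (by linarith)
  have hu : |1 - y| < 1 := abs_lt.2 ⟨by linarith, by linarith⟩
  have hv : |1 - y ^ r| < 1 := abs_lt.2 ⟨by linarith, by linarith⟩
  have hw : HasDerivAt (fun t : ℝ => 1 - t ^ r) (-(r * y ^ (r - 1))) y :=
    (hasDerivAt_rpow_const (Or.inl hy0.ne')).const_sub 1
  have h1 := HasDerivAt.comp y (hasDerivAt_seriesSum_coeffF hσ hσ1 hv) hw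
  have h2 := HasDerivAt.comp y (hasDerivAt_seriesSum_coeffF hs hs1 hu)
    ((hasDerivAt_id y).const_sub 1)
  refine (h1.sub h2).congr_deriv ?_
  rw [negDerivDiff]
  ring

lemma hasDerivAt_negDerivDiff {s σ r y : ℝ} (hs : 0 ≤ s) (hs1 : s ≤ 1) (hσ : 0 ≤ σ) (hσ1 : σ ≤ 1)
    (hr : 1 ≤ r) (hy0 : 0 < y) (hy : y ≤ 1) :
    HasDerivAt (negDerivDiff s σ r)
      (-(1 / y) * (s * (1 - s) / 2 * seriesSum (coeffA s) (1 - y) + r * σ * y ^ (r - 1) *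
        ((r - 1) * seriesSum (coeffB σ) (1 - y ^ r) -
          r * (1 - σ) / 2 * seriesSum (coeffA σ) (1 - y ^ r)))) y := by
  have hw0 : 0 < y ^ r := rpow_pos_of_pos hy0 r
  have hw1 : y ^ r ≤ 1 := rpow_le_one hy0.le hy (by linarith)
  have hu : |1 - y| < 1 := abs_lt.2 ⟨by linarith, by linarith⟩
  have hv : |1 - y ^ r| < 1 := abs_lt.2 ⟨by linarith, by linarith⟩
  have hw : HasDerivAt (fun t : ℝ => 1 - t ^ r) (-(r * y ^ (r - 1))) y :=
    (hasDerivAt_rpow_const (Or.inl hy0.ne')).const_sub 1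
  have hp : HasDerivAt (fun t : ℝ => t ^ (r - 1)) ((r - 1) * y ^ (r - 1 - 1)) y :=
    hasDerivAt_rpow_const (Or.inl hy0.ne')
  have h1 := HasDerivAt.comp y (hasDerivAt_seriesSum_coeffB hσ hσ1 hv) hw
  have h2 := HasDerivAt.comp y (hasDerivAt_seriesSum_coeffB hs hs1 hu)
    ((hasDerivAt_id y).const_sub 1)
  refine ((h2.const_mul s).sub ((hp.mul h1).const_mul (r * σ))).congr_deriv ?_
  have e1 : y ^ (r - 1 - 1) = y ^ (r - 1) / y := rpow_sub_one hy0.ne' _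
  have e2 : y ^ r = y ^ (r - 1) * y := by rw [← rpow_add_one hy0.ne']; ring_nf
  have hz : 0 < y ^ (r - 1) := rpow_pos_of_pos hy0 _
  rw [e1]
  simp only [Function.comp_apply, sub_sub_cancel]
  generalize seriesSum (coeffB σ) (1 - y ^ r) = β
  generalize seriesSum (coeffA σ) (1 - y ^ r) = α
  rw [e2]
  field_simp
  ring

lemma strictAntiOn_negDerivDiff {s σ r : ℝ} (hs : 0 < s) (hs1 : s < 1) (hσ : 0 < σ) (hr : 1 < r)
    (hσs : r * σ ≤ s) (hrs : s ≤ 2 * (r - 1))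
    (hquad : r * σ * (2 - r - r * σ) ≤ s * (1 - s)) :
    StrictAntiOn (negDerivDiff s σ r) (Ioc 0 1) := by
  have hσ1 : σ < 1 := by nlinarith
  have hD : ∀ y ∈ Ioc (0 : ℝ) 1, _ := fun y hy =>
    hasDerivAt_negDerivDiff hs.le hs1.le hσ.le hσ1.le hr.le hy.1 hy.2
  refine strictAntiOn_of_hasDerivWithinAt_neg (convex_Ioc 0 1)
    (fun y hy => (hD y hy).continuousAt.continuousWithinAt)
    (fun y hy => (hD y (interior_subset hy)).hasDerivWithinAt) fun y hy => ?_
  rw [interior_Ioc] at hy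
  have hy0 := hy.1
  have hw0 : 0 < y ^ r := rpow_pos_of_pos hy0 r
  have hw1 : y ^ r < 1 := rpow_lt_one hy0.le hy.2 (by linarith)
  have hz : 0 < y ^ (r - 1) := rpow_pos_of_pos hy0 _
  have hAB := seriesSum_coeffA_lt_coeffB hσ.le hσ1 (sub_pos.2 hw1) (by linarith : 1 - y ^ r < 1)
  have hA1 := one_le_seriesSum_coeffA hσ.le hσ1.le (sub_pos.2 hw1).le (by linarith : 1 - y ^ r < 1)
  have hle := rpow_mul_seriesSum_coeffA_le hs.le hs1.le hσ.le hσ1.le hr.le hrs hy0 hy.2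
  set α := seriesSum (coeffA σ) (1 - y ^ r)
  set β := seriesSum (coeffB σ) (1 - y ^ r)
  set z := y ^ (r - 1)
  set A := seriesSum (coeffA s) (1 - y)
  have hzα : 0 < z * α := by positivity
  have h1 : r * σ * (2 - r - r * σ) * (z * α) ≤ s * (1 - s) * A :=
    (mul_le_mul_of_nonneg_right hquad hzα.le).trans
      (mul_le_mul_of_nonneg_left hle (mul_nonneg hs.le (sub_nonneg.2 hs1.le)))
  have h2 : 0 < r * σ * z * ((r - 1) * (β - α)) := by
    have := sub_pos.2 hAB
    have := sub_pos.2 hr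
    positivity
  rw [neg_mul, neg_lt_zero]
  refine mul_pos (by positivity) ?_
  linarith

lemma one_le_quartic {s s₀ : ℝ} (hs₀ : s₀ < 1) (hss : s ≤ s₀)
    (h₀ : 4 * s₀ * (1 - s₀) * (1 + s₀) ^ 2 = 1) (hs : 0 < s) (h : 1 < 2 * s * (1 + s)) :
    1 ≤ 4 * s * (1 - s) * (1 + s) ^ 2 := by
  have h36 : 36 / 100 < s := by nlinarith
  by_cases h9 : s ≤ 9 / 10
  · nlinarith [mul_nonneg (sub_nonneg.2 h36.le) (sub_nonneg.2 h9), mul_nonneg (mul_nonneg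
      (sub_nonneg.2 h36.le) (sub_nonneg.2 h9)) hs.le, mul_nonneg (mul_nonneg
      (sub_nonneg.2 h36.le) (sub_nonneg.2 h9)) (mul_nonneg hs.le hs.le)]
  · push Not at h9
    have hQ : 1 + (s + s₀) - (s ^ 2 + s * s₀ + s₀ ^ 2) - (s + s₀) * (s ^ 2 + s₀ ^ 2) ≤ 0 := by
      have : 9 / 10 < s₀ := h9.trans_le hss
      nlinarith [mul_pos (sub_pos.2 h9) (sub_pos.2 this), mul_pos hs (sub_pos.2 h9),
        mul_pos (hs.trans_le hss) (sub_pos.2 this)]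
    nlinarith [mul_nonneg (sub_nonneg.2 hss) (neg_nonneg.2 hQ)]

lemma quadratic_le {s s₀ r ρ : ℝ} (hs₀ : s₀ < 1) (hss : s ≤ s₀)
    (h₀ : 4 * s₀ * (1 - s₀) * (1 + s₀) ^ 2 = 1) (hs : 0 < s) (hρ : 0 ≤ ρ) (hρs : ρ ≤ s)
    (hr : (2 - r) * (1 + s) ≤ 1) : ρ * (2 - r - ρ) ≤ s * (1 - s) := by
  have hs1 : 0 < 1 + s := by linarith
  suffices h : ρ * (1 - ρ * (1 + s)) ≤ s * (1 - s) * (1 + s) by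
    refine le_of_mul_le_mul_right ?_ hs1
    nlinarith [mul_le_mul_of_nonneg_left hr hρ]
  by_cases h : 2 * s * (1 + s) ≤ 1
  · have h1 : 0 ≤ (s - ρ) * (1 - (s + ρ) * (1 + s)) := by
      refine mul_nonneg (sub_nonneg.2 hρs) ?_
      nlinarith
    nlinarith [pow_pos hs 2]
  · have h1 := one_le_quartic hs₀ hss h₀ hs (not_le.1 h)
    have h2 := sq_nonneg (2 * ρ * (1 + s) - 1)
    refine le_of_mul_le_mul_right ?_ (by positivity : 0 < 4 * (1 + s))
    nlinarith

lemma StrictAntiOn.image_Ioo_eq_of_tendsto {g : ℝ → ℝ} {a b l m : ℝ} (hab : a < b)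
    (hg : StrictAntiOn g (Ioo a b)) (hc : ContinuousOn g (Ioo a b))
    (hl : Tendsto g (𝓝[>] a) (𝓝 l)) (hm : Tendsto g (𝓝[<] b) (𝓝 m)) :
    g '' Ioo a b = Ioo m l := by
  apply Subset.antisymm
  · rintro _ ⟨x, hx, rfl⟩
    obtain ⟨x₁, hx₁, hx₁'⟩ := exists_between hx.1
    obtain ⟨x₂, hx₂, hx₂'⟩ := exists_between hx.2
    have h₁ : x₁ ∈ Ioo a b := ⟨hx₁, hx₁'.trans hx.2⟩
    have h₂ : x₂ ∈ Ioo a b := ⟨hx.1.trans hx₂, hx₂'⟩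
    constructor
    · refine lt_of_le_of_lt (le_of_tendsto hm ?_) (hg hx h₂ hx₂)
      filter_upwards [Ioo_mem_nhdsLT hx₂'] with t ht
      exact (hg h₂ ⟨h₂.1.trans ht.1, ht.2⟩ ht.1).le
    · refine lt_of_lt_of_le (hg h₁ hx hx₁') (ge_of_tendsto hl ?_)
      filter_upwards [Ioo_mem_nhdsGT hx₁] with t ht
      exact (hg ⟨ht.1, ht.2.trans h₁.2⟩ h₁ ht.2).le
  · exact isPreconnected_Ioo.intermediate_value_Ioo
      (le_principal_iff.2 (Ioo_mem_nhdsLT hab)) (le_principal_iff.2 (Ioo_mem_nhdsGT hab)) hc hm hl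

/-- The quotient `(F(-q, q; 1; 1 - y ^ r) - F(-p, p; 1; 1 - y)) / (1 - y)`, where `s = p²` and
`σ = q²`. -/
noncomputable def diffQuot (s σ r y : ℝ) : ℝ :=
  (seriesSum (coeffF σ) (1 - y ^ r) - seriesSum (coeffF s) (1 - y)) / (1 - y)

lemma strictAntiOn_diffQuot {s σ r : ℝ} (hs : 0 < s) (hs1 : s < 1) (hσ : 0 < σ) (hr : 1 < r)
    (hσs : r * σ ≤ s) (hrs : s ≤ 2 * (r - 1))
    (hquad : r * σ * (2 - r - r * σ) ≤ s * (1 - s)) :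
    StrictAntiOn (diffQuot s σ r) (Ioo 0 1) := by
  have hσ1 : σ < 1 := by nlinarith
  have hD : ∀ y ∈ Ioc (0 : ℝ) 1, _ := fun y hy =>
    hasDerivAt_diff hs.le hs1.le hσ.le hσ1.le hr.le hy.1 hy.2
  have hconv : StrictConvexOn ℝ (Ioc 0 1)
      (fun t => seriesSum (coeffF σ) (1 - t ^ r) - seriesSum (coeffF s) (1 - t)) := by
    refine StrictMonoOn.strictConvexOn_of_deriv (convex_Ioc 0 1)
      (fun y hy => (hD y hy).continuousAt.continuousWithinAt) fun x hx y hy hxy => ?_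
    replace hx := interior_subset hx
    replace hy := interior_subset hy
    rw [(hD x hx).deriv, (hD y hy).deriv, neg_lt_neg_iff]
    exact strictAntiOn_negDerivDiff hs hs1 hσ hr hσs hrs hquad hx hy hxy
  intro x hx y hy hxy
  have h := hconv.secant_strict_mono (a := 1) ⟨one_pos, le_rfl⟩ (Ioo_subset_Ioc_self hx)
    (Ioo_subset_Ioc_self hy) hx.2.ne hy.2.ne hxy
  simp only [one_rpow, sub_self, seriesSum_zero] at h
  simp only [coeffF, sub_self, sub_zero] at h
  rw [← neg_lt_neg_iff, ← div_neg, ← div_neg, neg_sub, neg_sub] at h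
  exact h

lemma image_diffQuot {p q r : ℝ} (hp : 0 < p) (hp1 : p < 1) (hq : 0 < q) (hr : 1 < r)
    (hσs : r * q ^ 2 ≤ p ^ 2) (hrs : p ^ 2 ≤ 2 * (r - 1))
    (hquad : r * q ^ 2 * (2 - r - r * q ^ 2) ≤ p ^ 2 * (1 - p ^ 2)) :
    diffQuot (p ^ 2) (q ^ 2) r '' Ioo 0 1 =
      Ioo (p ^ 2 - r * q ^ 2) (sin (π * q) / (π * q) - sin (π * p) / (π * p)) := by
  have hs : 0 < p ^ 2 := by positivity
  have hσ : 0 < q ^ 2 := by positivity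
  have hs1 : p ^ 2 < 1 := by nlinarith
  have hσ1 : q ^ 2 < 1 := by nlinarith
  have hD : ∀ y ∈ Ioc (0 : ℝ) 1, _ := fun y hy =>
    hasDerivAt_diff hs.le hs1.le hσ.le hσ1.le hr.le hy.1 hy.2
  refine (strictAntiOn_diffQuot hs hs1 hσ hr hσs hrs hquad).image_Ioo_eq_of_tendsto one_pos ?_ ?_ ?_
  · intro y hy
    exact ((hD y (Ioo_subset_Ioc_self hy)).continuousAt.div
      (by fun_prop) (sub_pos.2 hy.2).ne').continuousWithinAt
  · have h1 : Tendsto (fun y : ℝ => 1 - y) (𝓝[>] 0) (𝓝 1) := by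
      have : Continuous fun y : ℝ => 1 - y := by fun_prop
      simpa using (this.tendsto 0).mono_left nhdsWithin_le_nhds
    have h2 : Tendsto (fun y : ℝ => 1 - y ^ r) (𝓝[>] 0) (𝓝 1) := by
      have : Continuous fun y : ℝ => 1 - y ^ r :=
        continuous_const.sub (continuous_rpow_const (by linarith))
      simpa [zero_rpow (by linarith : r ≠ 0)] using (this.tendsto 0).mono_left nhdsWithin_le_nhds
    have h1' : Tendsto (fun y : ℝ => 1 - y) (𝓝[>] 0) (𝓝[<] 1) :=
      tendsto_nhdsWithin_iff.2 ⟨h1, by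
        filter_upwards [self_mem_nhdsWithin] with y hy
        exact sub_lt_self (1 : ℝ) (mem_Ioi.1 hy)⟩
    have h2' : Tendsto (fun y : ℝ => 1 - y ^ r) (𝓝[>] 0) (𝓝[<] 1) :=
      tendsto_nhdsWithin_iff.2 ⟨h2, by
        filter_upwards [self_mem_nhdsWithin] with y hy
        exact sub_lt_self (1 : ℝ) (rpow_pos_of_pos (mem_Ioi.1 hy) r)⟩
    have h3 := (((tendsto_seriesSum_coeffF hq.ne').comp h2').sub
      ((tendsto_seriesSum_coeffF hp.ne').comp h1')).div h1 one_ne_zero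
    rw [div_one] at h3
    exact h3.congr fun y => rfl
  · have h := (hasDerivAt_iff_tendsto_slope.1 (hD 1 ⟨one_pos, le_rfl⟩)).neg
    have h' := h.mono_left (nhdsWithin_mono 1 (fun y (hy : y < 1) => hy.ne))
    have e : p ^ 2 - r * q ^ 2 = negDerivDiff (p ^ 2) (q ^ 2) r 1 := by
      simp [negDerivDiff, seriesSum_zero, coeffB, eulerProd]
    rw [neg_neg, ← e] at h'
    refine h'.congr fun y => ?_
    rw [slope_def_field, diffQuot]
    simp only [one_rpow, sub_self, seriesSum_zero]
    simp only [coeffF, sub_self, sub_zero]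
    rw [← div_neg, neg_sub]

lemma image_rpow_Ioo {c : ℝ} (hc : 0 < c) : (fun x : ℝ => x ^ c) '' Ioo 0 1 = Ioo 0 1 := by
  apply Subset.antisymm
  · rintro _ ⟨x, hx, rfl⟩
    exact ⟨rpow_pos_of_pos hx.1 c, rpow_lt_one hx.1.le hx.2 hc⟩
  · intro y hy
    exact ⟨y ^ c⁻¹, ⟨rpow_pos_of_pos hy.1 _, rpow_lt_one hy.1.le hy.2 (inv_pos.2 hc)⟩,
      rpow_inv_rpow hy.1.le hc.ne'⟩

theorem stmt13 (a₀ a c d δ δ₂ : ℝ)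
    (ha₀ : a₀ ∈ Ioo (0:ℝ) 1)
    (hroot : 4 * a₀ * (2 - a₀) * (1 - a₀) ^ 2 * (a₀ ^ 2 - 2 * a₀ + 2) ^ 2 = 1)
    (hmin : ∀ x ∈ Ioo (0:ℝ) 1,
      4 * x * (2 - x) * (1 - x) ^ 2 * (x ^ 2 - 2 * x + 2) ^ 2 = 1 → a₀ ≤ x)
    (ha : a ∈ Ico a₀ 1)
    (hc : 0 < c) (hd : 0 < d) (hcd : c / d ≤ ((a - 1) ^ 2 + 1) / (2 * (a - 1) ^ 2 + 1))
    (hδ₂ : δ₂ = (Real.sqrt (c / d) - 1) * (1 - a))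
    (hδ : δ ∈ Ioc (a - 1) δ₂) :
    let G₁ : ℝ → ℝ := fun x =>
      (hyp (a - 1 - δ) (1 - a + δ) 1 (1 - x ^ d) - hyp (a - 1) (1 - a) 1 (1 - x ^ c)) /
        (1 - x ^ c)
    let C₃ : ℝ := -(d / c) * (δ ^ 2 + 2 * (1 - a) * δ + (1 - a) ^ 2 * (1 - c / d))
    let C₄ : ℝ := (1 / π) *
      (Real.sin (π * (a - δ)) / (1 - a + δ) - Real.sin (π * a) / (1 - a))
    δ₂ < 0 ∧ 0 ≤ C₃ ∧ StrictAntiOn G₁ (Ioo 0 1) ∧ G₁ '' Ioo 0 1 = Ioo C₃ C₄ := by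
  intro G₁ C₃ C₄
  obtain ⟨p, rfl⟩ : ∃ p, a = 1 - p := ⟨1 - a, by ring⟩
  obtain ⟨q, rfl⟩ : ∃ q, δ = q - p := ⟨δ + p, by ring⟩
  have hp : 0 < p := by linarith [ha.2]
  have hpa : p ≤ 1 - a₀ := by linarith [ha.1]
  have hp1 : p < 1 := by linarith [ha₀.1]
  have hq : 0 < q := by linarith [hδ.1]
  have hk0 : 0 < c / d := div_pos hc hd
  rw [show (1 - p - 1) ^ 2 = p ^ 2 by ring, le_div_iff₀ (by positivity)] at hcd
  have hk1 : c / d < 1 := by nlinarith [pow_pos hp 2]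
  have hqk : q ≤ √(c / d) * p := by
    have := hδ.2
    rw [hδ₂] at this
    linarith
  have hq2 : q ^ 2 ≤ c / d * p ^ 2 := by
    have := pow_le_pow_left₀ hq.le hqk 2
    rwa [mul_pow, sq_sqrt hk0.le] at this
  have hrk : d / c * (c / d) = 1 := by field_simp
  have hr0 : 0 < d / c := div_pos hd hc
  have hr : 1 < d / c := (one_lt_div hc).2 ((div_lt_one hd).1 hk1)
  have hσs : d / c * q ^ 2 ≤ p ^ 2 := by
    calc d / c * q ^ 2 ≤ d / c * (c / d * p ^ 2) := mul_le_mul_of_nonneg_left hq2 hr0.le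
      _ = p ^ 2 := by rw [← mul_assoc, hrk, one_mul]
  have hrk' : 2 * p ^ 2 + 1 ≤ d / c * (p ^ 2 + 1) := by
    have := mul_le_mul_of_nonneg_left hcd hr0.le
    rwa [← mul_assoc, hrk, one_mul] at this
  have hs1 : p ^ 2 < 1 := by nlinarith
  have hrs : p ^ 2 ≤ 2 * (d / c - 1) := by nlinarith [pow_pos hp 2]
  have hquad : d / c * q ^ 2 * (2 - d / c - d / c * q ^ 2) ≤ p ^ 2 * (1 - p ^ 2) := by
    refine quadratic_le (s₀ := (1 - a₀) ^ 2) (by nlinarith [ha₀.1, ha₀.2])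
      (pow_le_pow_left₀ hp.le hpa 2) ?_ (by positivity) (by positivity) hσs (by linarith)
    linear_combination hroot
  have hG : EqOn G₁ (diffQuot (p ^ 2) (q ^ 2) (d / c) ∘ fun x => x ^ c) (Ioo 0 1) := by
    intro x hx
    simp only [G₁, diffQuot, Function.comp_apply]
    rw [← rpow_mul hx.1.le, mul_div_cancel₀ _ hc.ne', ← hyp_neg_eq_seriesSum,
      ← hyp_neg_eq_seriesSum]
    congr 3 <;> ring
  have hC₃ : C₃ = p ^ 2 - d / c * q ^ 2 := by
    simp only [C₃]
    linear_combination p ^ 2 * hrk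
  have hC₄ : C₄ = sin (π * q) / (π * q) - sin (π * p) / (π * p) := by
    simp only [C₄]
    rw [show π * (1 - p - (q - p)) = π - π * q by ring, show π * (1 - p) = π - π * p by ring,
      sin_pi_sub, sin_pi_sub, show 1 - (1 - p) + (q - p) = q by ring, sub_sub_cancel]
    field_simp
  have hmaps : MapsTo (fun x : ℝ => x ^ c) (Ioo 0 1) (Ioo 0 1) := fun x hx =>
    image_rpow_Ioo hc ▸ mem_image_of_mem _ hx
  refine ⟨?_, ?_, ?_, ?_⟩
  · rw [hδ₂, sub_sub_cancel]
    refine mul_neg_of_neg_of_pos (sub_neg.2 ?_) hp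
    rw [sqrt_lt' one_pos, one_pow]
    exact hk1
  · rw [hC₃]
    exact sub_nonneg.2 hσs
  · refine StrictAntiOn.congr (fun x hx y hy hxy => ?_) hG.symm
    exact strictAntiOn_diffQuot (by positivity) hs1 (by positivity) hr hσs hrs hquad
      (hmaps hx) (hmaps hy) (rpow_lt_rpow hx.1.le hxy hc)
  · rw [hG.image_eq, image_comp, image_rpow_Ioo hc,
      image_diffQuot hp hp1 hq hr hσs hrs hquad, hC₃, hC₄]
end

section
/- Let c, d > 0 with 0 < c/d ≤ 5/6. Then sup{ δ ∈ (−1/2, 0) : F(−1/2, 1/2; 1; 1−x^c) < F(−1/2−δ, 1/2+δ; 1; 1−x^d) for all x ∈ (0,1) } = (√(c/d) − 1)/2. -/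
open Real Set Filter Topology

/-- Coefficients of polynomial growth. -/
def PolyGrowth (f : ℕ → ℝ) : Prop :=
  ∃ (C : ℝ) (k : ℕ), ∀ n, |f n| ≤ C * ((n : ℝ) + 1) ^ k

/-- The coefficients of the formal derivative of a power series. -/
def derivCoeff (f : ℕ → ℝ) (n : ℕ) : ℝ := (n + 1) * f (n + 1)

/-- The sum of the power series with coefficients `f`. -/
noncomputable def powerSum (f : ℕ → ℝ) (t : ℝ) : ℝ := ∑' n : ℕ, f n * t ^ n

theorem PolyGrowth.derivCoeff {f : ℕ → ℝ} (hf : PolyGrowth f) : PolyGrowth (derivCoeff f) := by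
  obtain ⟨C, k, h⟩ := hf
  have hC : 0 ≤ C := by simpa using (abs_nonneg _).trans (h 0)
  refine ⟨C * 2 ^ k, k + 1, fun n => ?_⟩
  have h1 := h (n + 1)
  push_cast at h1
  have h2 : ((n : ℝ) + 1 + 1) ^ k ≤ (2 * ((n : ℝ) + 1)) ^ k := by
    gcongr
    have : (0 : ℝ) ≤ n := n.cast_nonneg
    linarith
  rw [_root_.derivCoeff, abs_mul, abs_of_nonneg (by positivity : (0 : ℝ) ≤ (n : ℝ) + 1)]
  calc ((n : ℝ) + 1) * |f (n + 1)| ≤ (n + 1) * (C * (2 * ((n : ℝ) + 1)) ^ k) := by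
        gcongr
        exact h1.trans (by gcongr)
    _ = C * 2 ^ k * ((n : ℝ) + 1) ^ (k + 1) := by rw [mul_pow]; ring

theorem add_one_pow_le (n k : ℕ) : ((n : ℝ) + 1) ^ k ≤ 2 ^ k * ((n : ℝ) ^ k + 1) := by
  have hn : (0 : ℝ) ≤ n := n.cast_nonneg
  rcases le_total (n : ℝ) 1 with h | h
  · calc ((n : ℝ) + 1) ^ k ≤ 2 ^ k := pow_le_pow_left₀ (by positivity) (by linarith) k
      _ ≤ 2 ^ k * ((n : ℝ) ^ k + 1) := le_mul_of_one_le_right (by positivity)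
          (le_add_of_nonneg_left (by positivity))
  · calc ((n : ℝ) + 1) ^ k ≤ (2 * n) ^ k := pow_le_pow_left₀ (by positivity) (by linarith) k
      _ = 2 ^ k * (n : ℝ) ^ k := mul_pow _ _ _
      _ ≤ 2 ^ k * ((n : ℝ) ^ k + 1) :=
          mul_le_mul_of_nonneg_left (le_add_of_nonneg_right zero_le_one) (by positivity)

theorem PolyGrowth.summable_abs {f : ℕ → ℝ} (hf : PolyGrowth f) {r : ℝ} (h0 : 0 ≤ r)
    (h1 : r < 1) : Summable fun n => |f n| * r ^ n := by
  obtain ⟨C, k, h⟩ := hf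
  have hC : 0 ≤ C := by simpa using (abs_nonneg _).trans (h 0)
  have hs₁ : Summable fun n : ℕ => (n : ℝ) ^ k * r ^ n :=
    summable_pow_mul_geometric_of_norm_lt_one k (by rwa [Real.norm_eq_abs, abs_of_nonneg h0])
  have hs₂ : Summable fun n : ℕ => r ^ n := summable_geometric_of_lt_one h0 h1
  refine ((hs₁.add hs₂).mul_left (C * 2 ^ k)).of_nonneg_of_le
    (fun n => mul_nonneg (abs_nonneg _) (pow_nonneg h0 n)) fun n => ?_
  calc |f n| * r ^ n ≤ C * (2 ^ k * ((n : ℝ) ^ k + 1)) * r ^ n :=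
        mul_le_mul_of_nonneg_right
          ((h n).trans (mul_le_mul_of_nonneg_left (add_one_pow_le n k) hC)) (pow_nonneg h0 n)
    _ = C * 2 ^ k * ((n : ℝ) ^ k * r ^ n + r ^ n) := by ring

theorem PolyGrowth.summable {f : ℕ → ℝ} (hf : PolyGrowth f) {t : ℝ} (ht : |t| < 1) :
    Summable fun n => f n * t ^ n := by
  refine Summable.of_norm ?_
  simpa [abs_mul, abs_pow] using hf.summable_abs (abs_nonneg t) ht

theorem PolyGrowth.hasDerivAt {f : ℕ → ℝ} (hf : PolyGrowth f) {t : ℝ} (ht : |t| < 1) :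
    HasDerivAt (powerSum f) (powerSum (_root_.derivCoeff f) t) t := by
  obtain ⟨r, htr, hr1⟩ := exists_between ht
  have hr0 : 0 ≤ r := (abs_nonneg t).trans htr.le
  have hu : Summable fun n : ℕ => |f n| * (n * r ^ (n - 1)) := by
    rw [← summable_nat_add_iff 1]
    refine (hf.derivCoeff.summable_abs hr0 hr1).congr fun n => ?_
    rw [_root_.derivCoeff, abs_mul, abs_of_nonneg (by positivity : (0 : ℝ) ≤ (n : ℝ) + 1)]
    rw [Nat.add_sub_cancel]
    push_cast
    ring
  have key := hasDerivAt_tsum_of_isPreconnected (g := fun (n : ℕ) y => f n * y ^ n)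
    (g' := fun n y => f n * (n * y ^ (n - 1))) (y₀ := t) (y := t) hu Metric.isOpen_ball
    (convex_ball (0 : ℝ) r).isPreconnected
    (fun n y _ => by simpa using (hasDerivAt_pow n y).const_mul (f n))
    (fun n y hy => by
      have hy' : |y| ≤ r := by simpa using (mem_ball_zero_iff.1 hy).le
      rw [Real.norm_eq_abs, abs_mul, abs_mul, abs_pow, Nat.abs_cast]
      gcongr)
    (by simpa using htr) (hf.summable ht) (by simpa using htr)
  refine key.congr_deriv ?_
  have hs : Summable fun n : ℕ => f n * (n * t ^ (n - 1)) := by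
    refine hu.of_norm_bounded fun n => ?_
    rw [Real.norm_eq_abs, abs_mul, abs_mul, abs_pow, Nat.abs_cast]
    gcongr
  rw [hs.tsum_eq_zero_add, powerSum]
  simp only [Nat.cast_zero, zero_mul, mul_zero, zero_add]
  refine tsum_congr fun n => ?_
  rw [_root_.derivCoeff]
  rw [Nat.add_sub_cancel]
  push_cast
  ring

theorem hasSum_shift {f : ℕ → ℝ} (h0 : f 0 = 0) {t : ℝ}
    (hs : Summable fun n => f (n + 1) * t ^ n) :
    HasSum (fun n => f n * t ^ n) (t * powerSum (fun n => f (n + 1)) t) := by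
  rw [← hasSum_nat_add_iff' 1]
  simpa [h0, powerSum, pow_succ, mul_comm, mul_left_comm, mul_assoc] using hs.hasSum.mul_left t

/-- The coefficients of `F(-a,a;1;·)`. -/
noncomputable def hypCoeff (a : ℝ) (n : ℕ) : ℝ :=
  (∏ i ∈ Finset.range n, (-a + i)) * (∏ i ∈ Finset.range n, (a + i)) /
    ((∏ i ∈ Finset.range n, ((1 : ℝ) + i)) * (Nat.factorial n))

theorem hypCoeff_zero (a : ℝ) : hypCoeff a 0 = 1 := by simp [hypCoeff]

theorem hypCoeff_succ (a : ℝ) (n : ℕ) :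
    ((n : ℝ) + 1) ^ 2 * hypCoeff a (n + 1) = (n ^ 2 - a ^ 2) * hypCoeff a n := by
  have h : (∏ i ∈ Finset.range n, ((1 : ℝ) + i)) ≠ 0 :=
    Finset.prod_ne_zero_iff.2 fun i _ => by positivity
  have h' : (Nat.factorial n : ℝ) ≠ 0 := by positivity
  have h'' : (1 + n : ℝ) ≠ 0 := by positivity
  simp only [hypCoeff, Finset.prod_range_succ, Nat.factorial_succ]
  push_cast
  rw [add_comm (n : ℝ) 1]
  field_simp
  ring

theorem hypCoeff_one (a : ℝ) : hypCoeff a 1 = -a ^ 2 := by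
  have := hypCoeff_succ a 0
  simpa [hypCoeff_zero] using this

theorem abs_hypCoeff_le_one {a : ℝ} (ha : a ^ 2 ≤ 1) (n : ℕ) : |hypCoeff a n| ≤ 1 := by
  induction n with
  | zero => simp [hypCoeff_zero]
  | succ n ih =>
    have h := congrArg abs (hypCoeff_succ a n)
    have hn : (0 : ℝ) ≤ n := n.cast_nonneg
    rw [abs_mul, abs_mul, abs_of_nonneg (by positivity : (0 : ℝ) ≤ ((n : ℝ) + 1) ^ 2)] at h
    have h2 : |(n : ℝ) ^ 2 - a ^ 2| ≤ ((n : ℝ) + 1) ^ 2 :=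
      abs_le.2 ⟨by nlinarith, by nlinarith [sq_nonneg a]⟩
    have h3 : ((n : ℝ) + 1) ^ 2 * |hypCoeff a (n + 1)| ≤ ((n : ℝ) + 1) ^ 2 * 1 := by
      rw [h]
      exact mul_le_mul h2 ih (abs_nonneg _) (by positivity)
    exact le_of_mul_le_mul_left h3 (by positivity)

theorem polyGrowth_hypCoeff {a : ℝ} (ha : a ^ 2 ≤ 1) : PolyGrowth (hypCoeff a) :=
  ⟨1, 0, fun n => by simpa using abs_hypCoeff_le_one ha n⟩

theorem hypCoeff_succ_nonpos {a : ℝ} (ha : a ^ 2 ≤ 1) (n : ℕ) : hypCoeff a (n + 1) ≤ 0 := by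
  induction n with
  | zero => simpa [hypCoeff_one] using sq_nonneg a
  | succ n ih =>
    have h := hypCoeff_succ a (n + 1)
    have h1 : a ^ 2 ≤ ((n + 1 : ℕ) : ℝ) ^ 2 := by
      push_cast
      nlinarith [(n.cast_nonneg : (0 : ℝ) ≤ n)]
    have h2 := mul_nonpos_of_nonneg_of_nonpos (sub_nonneg.2 h1) ih
    rw [← h] at h2
    exact nonpos_of_mul_nonpos_right h2 (by positivity)

theorem sum_hypCoeff (a : ℝ) (n : ℕ) :
    a ^ 2 * ∑ k ∈ Finset.range (n + 1), hypCoeff a k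
      = -(((n : ℝ) + 1) ^ 2 * hypCoeff a (n + 1)) := by
  induction n with
  | zero => simp [hypCoeff_zero, hypCoeff_one]
  | succ n ih =>
    rw [Finset.sum_range_succ, mul_add, ih, hypCoeff_succ a (n + 1)]
    push_cast
    ring

theorem one_sub_le_powerSum_hypCoeff {a : ℝ} (h0 : 0 < a) (ha : a ^ 2 ≤ 1) {t : ℝ}
    (ht0 : 0 ≤ t) (ht1 : t < 1) : 1 - t ≤ powerSum (hypCoeff a) t := by
  have hs := (polyGrowth_hypCoeff ha).summable (t := t) (by rwa [abs_of_nonneg ht0])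
  have hlim := (tendsto_add_atTop_iff_nat 1).2 hs.hasSum.tendsto_sum_nat
  refine ge_of_tendsto' hlim fun n => ?_
  have hsum : 0 ≤ ∑ k ∈ Finset.range (n + 1), hypCoeff a k := by
    have h := sum_hypCoeff a n
    have h1 : 0 ≤ a ^ 2 * ∑ k ∈ Finset.range (n + 1), hypCoeff a k := by
      rw [h, neg_nonneg]
      exact mul_nonpos_of_nonneg_of_nonpos (by positivity) (hypCoeff_succ_nonpos ha n)
    exact nonneg_of_mul_nonneg_right h1 (by positivity)
  rw [Finset.sum_range_succ'] at hsum ⊢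
  have hle : t * ∑ k ∈ Finset.range n, hypCoeff a (k + 1)
      ≤ ∑ k ∈ Finset.range n, hypCoeff a (k + 1) * t ^ (k + 1) := by
    rw [Finset.mul_sum]
    refine Finset.sum_le_sum fun k _ => ?_
    rw [mul_comm]
    refine mul_le_mul_of_nonpos_left ?_ (hypCoeff_succ_nonpos ha k)
    rw [pow_succ]
    exact mul_le_of_le_one_left ht0 (pow_le_one₀ ht0 ht1.le)
  rw [hypCoeff_zero] at hsum ⊢
  have := mul_le_mul_of_nonneg_left hsum ht0
  simp only [pow_zero]
  linarith

theorem powerSum_derivCoeff_hypCoeff_neg {a : ℝ} (h0 : 0 < a) (ha : a ^ 2 ≤ 1) {t : ℝ}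
    (ht0 : 0 ≤ t) (ht1 : t < 1) : powerSum (derivCoeff (hypCoeff a)) t < 0 := by
  have hs := (polyGrowth_hypCoeff ha).derivCoeff.summable (t := t) (by rwa [abs_of_nonneg ht0])
  have hle : ∀ n, 0 ≤ -(derivCoeff (hypCoeff a) n * t ^ n) := fun n => by
    rw [neg_nonneg]
    exact mul_nonpos_of_nonpos_of_nonneg (mul_nonpos_of_nonneg_of_nonpos (by positivity)
      (hypCoeff_succ_nonpos ha n)) (by positivity)
  have := hs.neg.tsum_pos hle 0 (by simp [derivCoeff, hypCoeff_one]; positivity)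
  rw [tsum_neg] at this
  exact neg_pos.1 this

/-- The hypergeometric differential equation for `F(-a,a;1;·)`. -/
theorem powerSum_hypCoeff_ode {a : ℝ} (ha : a ^ 2 ≤ 1) {t : ℝ} (ht : |t| < 1) :
    (1 - t) * (t * powerSum (derivCoeff (derivCoeff (hypCoeff a))) t
      + powerSum (derivCoeff (hypCoeff a)) t) = -a ^ 2 * powerSum (hypCoeff a) t := by
  have hg := polyGrowth_hypCoeff ha
  have h1 := hasSum_shift (f := fun n => n * derivCoeff (hypCoeff a) n) (by simp)
    (by simpa [derivCoeff] using hg.derivCoeff.derivCoeff.summable ht)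
  have h2 := h1.add (hg.derivCoeff.summable ht).hasSum
  have h3 : HasSum (fun n : ℕ => ((n : ℝ) + 1) ^ 2 * hypCoeff a (n + 1) * t ^ n)
      (t * powerSum (derivCoeff (derivCoeff (hypCoeff a))) t
        + powerSum (derivCoeff (hypCoeff a)) t) := by
    convert h2 using 1
    · funext n
      simp only [derivCoeff]
      ring
    · congr 3
      funext n
      simp [derivCoeff]
  have h4 := hasSum_shift (f := fun n => (n : ℝ) ^ 2 * hypCoeff a n) (by simp)
    (by simpa using h3.summable)
  have h5 : powerSum (fun n => ((n + 1 : ℕ) : ℝ) ^ 2 * hypCoeff a (n + 1)) t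
      = t * powerSum (derivCoeff (derivCoeff (hypCoeff a))) t
        + powerSum (derivCoeff (hypCoeff a)) t := by
    rw [← h3.tsum_eq]
    simp [powerSum]
  rw [h5] at h4
  have h6 : HasSum (fun n : ℕ => -a ^ 2 * (hypCoeff a n * t ^ n))
      (-a ^ 2 * powerSum (hypCoeff a) t) := (hg.summable ht).hasSum.mul_left (-a ^ 2)
  have hfun : (fun n : ℕ => -a ^ 2 * (hypCoeff a n * t ^ n)) = fun n : ℕ =>
      ((n : ℝ) + 1) ^ 2 * hypCoeff a (n + 1) * t ^ n - (n : ℝ) ^ 2 * hypCoeff a n * t ^ n := by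
    funext n
    rw [hypCoeff_succ]
    ring
  have h7 := (h3.sub h4).unique (hfun ▸ h6)
  rw [← h7]
  ring

theorem hasDerivAt_one_sub_rpow (p : ℝ) {t : ℝ} (ht : t < 1) :
    HasDerivAt (fun t : ℝ => (1 - t) ^ p) (-(p * (1 - t) ^ p / (1 - t))) t := by
  have h : (1 - t) ≠ 0 := (sub_pos.2 ht).ne'
  refine (((hasDerivAt_id t).const_sub 1).rpow_const (p := p) (Or.inl h)).congr_deriv ?_
  simp only [id, rpow_sub_one h]
  ring

theorem rpow_mem_Ioo {p y : ℝ} (hp0 : 0 < p) (hy : y ∈ Ioo (0 : ℝ) 1) : y ^ p ∈ Ioo (0 : ℝ) 1 :=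
  ⟨rpow_pos_of_pos hy.1 p, rpow_lt_one hy.1.le hy.2 hp0⟩

theorem rpow_lt_one_sub_mul_one_sub {p y : ℝ} (hp0 : 0 < p) (hp1 : p < 1) (hy : y ∈ Ioo (0 : ℝ) 1) :
    y ^ p < 1 - p * (1 - y) := by
  have := rpow_one_add_lt_one_add_mul_self (s := y - 1) (by linarith [hy.1])
    (by linarith [hy.2]) hp0 hp1
  rw [add_sub_cancel] at this
  linarith

theorem mul_one_sub_rpow_lt {p y : ℝ} (hp0 : 0 < p) (hp1 : p < 1) (hy : y ∈ Ioo (0 : ℝ) 1) :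
    y * (1 - y ^ p) < (1 - y) * p * y ^ p := by
  have h := rpow_lt_one_sub_mul_one_sub (p := 1 - p) (by linarith) (by linarith) hy
  have h2 : y ^ p * y ^ (1 - p) = y := by
    rw [← rpow_add hy.1]
    simp
  have h3 := mul_lt_mul_of_pos_left h (rpow_mem_Ioo hp0 hy).1
  rw [h2] at h3
  linarith

section Comparison

variable {a p : ℝ}

/-- A Wronskian-type expression for `F(-1/2,1/2;1;1-(1-t)^p)` and `F(-a,a;1;t)`. -/
noncomputable def hypWronskian (a p t : ℝ) : ℝ :=
  t * (powerSum (derivCoeff (hypCoeff (1 / 2))) (1 - (1 - t) ^ p) * (p * (1 - t) ^ p / (1 - t))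
      * powerSum (hypCoeff a) t
    - powerSum (hypCoeff (1 / 2)) (1 - (1 - t) ^ p) * powerSum (derivCoeff (hypCoeff a)) t)

theorem abs_one_sub_rpow_lt_one (hp0 : 0 < p) {t : ℝ} (ht : t ∈ Ico (0 : ℝ) 1) :
    |1 - (1 - t) ^ p| < 1 := by
  have h1 : 0 < (1 - t) ^ p := rpow_pos_of_pos (sub_pos.2 ht.2) p
  have h2 : (1 - t) ^ p ≤ 1 := rpow_le_one (sub_pos.2 ht.2).le (by linarith [ht.1]) hp0.le
  rw [abs_lt]
  constructor <;> linarith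

theorem hasDerivAt_powerSum_comp {f : ℕ → ℝ} (hf : PolyGrowth f) (hp0 : 0 < p) {t : ℝ}
    (ht : t ∈ Ico (0 : ℝ) 1) :
    HasDerivAt (fun t => powerSum f (1 - (1 - t) ^ p))
      (powerSum (derivCoeff f) (1 - (1 - t) ^ p) * (p * (1 - t) ^ p / (1 - t))) t := by
  have h := (hasDerivAt_one_sub_rpow p ht.2).const_sub 1
  rw [neg_neg] at h
  exact (hf.hasDerivAt (abs_one_sub_rpow_lt_one hp0 ht)).comp t h

theorem hasDerivAt_hypWronskian (ha : a ^ 2 ≤ 1) (hp0 : 0 < p) {t : ℝ} (ht : t ∈ Ico (0 : ℝ) 1) :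
    HasDerivAt (hypWronskian a p)
      (powerSum (derivCoeff (hypCoeff (1 / 2))) (1 - (1 - t) ^ p) * (p * (1 - t) ^ p / (1 - t))
          * powerSum (hypCoeff a) t
        - powerSum (hypCoeff (1 / 2)) (1 - (1 - t) ^ p) * powerSum (derivCoeff (hypCoeff a)) t
      + t * (powerSum (derivCoeff (derivCoeff (hypCoeff (1 / 2)))) (1 - (1 - t) ^ p)
            * (p * (1 - t) ^ p / (1 - t)) ^ 2 * powerSum (hypCoeff a) t
          + powerSum (derivCoeff (hypCoeff (1 / 2))) (1 - (1 - t) ^ p)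
            * (p * (1 - p) * (1 - t) ^ p / (1 - t) ^ 2) * powerSum (hypCoeff a) t
          - powerSum (hypCoeff (1 / 2)) (1 - (1 - t) ^ p)
            * powerSum (derivCoeff (derivCoeff (hypCoeff a))) t)) t := by
  have hg := polyGrowth_hypCoeff ha
  have hA := polyGrowth_hypCoeff (a := 1 / 2) (by norm_num)
  have htabs : |t| < 1 := by rw [abs_of_nonneg ht.1]; exact ht.2
  have hy : 1 - t ≠ 0 := (sub_pos.2 ht.2).ne'
  have hr := ((hasDerivAt_one_sub_rpow p ht.2).const_mul p).div
    ((hasDerivAt_id t).const_sub 1) hy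
  have h := (hasDerivAt_id t).mul
    ((((hasDerivAt_powerSum_comp hA.derivCoeff hp0 ht).mul hr).mul (hg.hasDerivAt htabs)).sub
      ((hasDerivAt_powerSum_comp hA hp0 ht).mul (hg.derivCoeff.hasDerivAt htabs)))
  refine h.congr_deriv ?_
  simp only [id, Pi.mul_apply, Pi.sub_apply, Pi.div_apply]
  field_simp
  ring

theorem hypWronskian_deriv_neg (ha0 : 0 < a) (ha : a ^ 2 ≤ 1) (hp0 : 0 < p) (hp1 : p < 1)
    (hap : 4 * a ^ 2 ≤ p) {t : ℝ} (ht : t ∈ Ioo (0 : ℝ) 1) : deriv (hypWronskian a p) t < 0 := by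
  rw [(hasDerivAt_hypWronskian ha hp0 ⟨ht.1.le, ht.2⟩).deriv]
  have htabs : |t| < 1 := by rw [abs_of_nonneg ht.1.le]; exact ht.2
  have hy : 1 - t ∈ Ioo (0 : ℝ) 1 := ⟨sub_pos.2 ht.2, by linarith [ht.1]⟩
  have hs := rpow_mem_Ioo hp0 hy
  have hup := rpow_lt_one_sub_mul_one_sub hp0 hp1 hy
  have hlow := mul_one_sub_rpow_lt hp0 hp1 hy
  have hodeG := powerSum_hypCoeff_ode ha htabs
  have hodeA := powerSum_hypCoeff_ode (a := 1 / 2) (by norm_num)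
    (abs_one_sub_rpow_lt_one hp0 ⟨ht.1.le, ht.2⟩)
  have hGpos := one_sub_le_powerSum_hypCoeff ha0 ha ht.1.le ht.2
  have hApos := one_sub_le_powerSum_hypCoeff (a := 1 / 2) (t := 1 - (1 - t) ^ p) (by norm_num)
    (by norm_num) (by linarith [hs.2]) (by linarith [hs.1])
  have hAneg := powerSum_derivCoeff_hypCoeff_neg (a := 1 / 2) (t := 1 - (1 - t) ^ p) (by norm_num)
    (by norm_num) (by linarith [hs.2]) (by linarith [hs.1])
  generalize powerSum (hypCoeff a) t = G at *
  generalize powerSum (derivCoeff (hypCoeff a)) t = G₁ at *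
  generalize powerSum (derivCoeff (derivCoeff (hypCoeff a))) t = G₂ at *
  generalize powerSum (hypCoeff (1 / 2)) (1 - (1 - t) ^ p) = A at *
  generalize powerSum (derivCoeff (hypCoeff (1 / 2))) (1 - (1 - t) ^ p) = A₁ at *
  generalize powerSum (derivCoeff (derivCoeff (hypCoeff (1 / 2)))) (1 - (1 - t) ^ p) = A₂ at *
  generalize (1 - t) ^ p = s at *
  obtain ⟨y, rfl⟩ : ∃ y, t = 1 - y := ⟨1 - t, by ring⟩
  simp only [sub_sub_cancel] at *
  obtain ⟨hy0, hy1⟩ := hy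
  obtain ⟨hs0, hs1⟩ := hs
  have hG : 0 < G := hy0.trans_le hGpos
  have hA : 0 < A := hs0.trans_le hApos
  have h1s : 0 < 1 - s := sub_pos.2 hs1
  have hA₂ : A₂ = (-(A / (4 * s)) - A₁) / (1 - s) := by
    field_simp
    linarith
  have hG₂ : (1 - y) * G₂ = -(a ^ 2 * G / y) - G₁ := by
    field_simp
    linarith
  have hbracket : 4 * a ^ 2 * (y * (1 - s)) < p * ((1 - y) * p * s) := by
    have hpos : 0 < y * (1 - s) := by positivity
    nlinarith
  have hrepr : A₁ * (p * s / y) * G - A * G₁ + (1 - y) * (A₂ * (p * s / y) ^ 2 * G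
        + A₁ * (p * (1 - p) * s / y ^ 2) * G - A * G₂)
      = A₁ * G * (p * s / (y ^ 2 * (1 - s)) * (1 - p * (1 - y) - s))
        + A * G / (4 * y ^ 2 * (1 - s))
          * (4 * a ^ 2 * (y * (1 - s)) - p * ((1 - y) * p * s)) := by
    have : A₁ * (p * s / y) * G - A * G₁ + (1 - y) * (A₂ * (p * s / y) ^ 2 * G
        + A₁ * (p * (1 - p) * s / y ^ 2) * G - A * G₂)
        = A₁ * (p * s / y) * G - A * G₁ + (1 - y) * (A₂ * (p * s / y) ^ 2 * G
        + A₁ * (p * (1 - p) * s / y ^ 2) * G) - A * ((1 - y) * G₂) := by ring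
    rw [this, hG₂, hA₂]
    field_simp
    ring
  rw [hrepr]
  have hfst : A₁ * G * (p * s / (y ^ 2 * (1 - s)) * (1 - p * (1 - y) - s)) < 0 := by
    have : 0 < 1 - p * (1 - y) - s := sub_pos.2 hup
    exact mul_neg_of_neg_of_pos (mul_neg_of_neg_of_pos hAneg hG) (by positivity)
  have hsnd : A * G / (4 * y ^ 2 * (1 - s))
      * (4 * a ^ 2 * (y * (1 - s)) - p * ((1 - y) * p * s)) < 0 :=
    mul_neg_of_pos_of_neg (by positivity) (sub_neg.2 hbracket)
  exact add_neg hfst hsnd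

theorem hypWronskian_neg (ha0 : 0 < a) (ha : a ^ 2 ≤ 1) (hp0 : 0 < p) (hp1 : p < 1)
    (hap : 4 * a ^ 2 ≤ p) {t : ℝ} (ht : t ∈ Ioo (0 : ℝ) 1) : hypWronskian a p t < 0 := by
  have h := strictAntiOn_of_deriv_neg (convex_Ico (0 : ℝ) 1)
    (fun t ht => (hasDerivAt_hypWronskian ha hp0 ht).continuousAt.continuousWithinAt)
    (fun t ht => hypWronskian_deriv_neg ha0 ha hp0 hp1 hap (by rwa [interior_Ico] at ht))
    (left_mem_Ico.2 one_pos) ⟨ht.1.le, ht.2⟩ ht.1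
  simpa [hypWronskian] using h

theorem powerSum_hypCoeff_at_zero (a : ℝ) : powerSum (hypCoeff a) 0 = 1 := by
  rw [powerSum, tsum_eq_single 0 fun n hn => by simp [hn]]
  simp [hypCoeff_zero]

theorem powerSum_derivCoeff_hypCoeff_at_zero (a : ℝ) :
    powerSum (derivCoeff (hypCoeff a)) 0 = -a ^ 2 := by
  rw [powerSum, tsum_eq_single 0 fun n hn => by simp [hn]]
  simp [derivCoeff, hypCoeff_one]

theorem powerSum_comp_lt (ha0 : 0 < a) (ha : a ^ 2 ≤ 1) (hp0 : 0 < p) (hp1 : p < 1)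
    (hap : 4 * a ^ 2 ≤ p) {t : ℝ} (ht : t ∈ Ioo (0 : ℝ) 1) :
    powerSum (hypCoeff (1 / 2)) (1 - (1 - t) ^ p) < powerSum (hypCoeff a) t := by
  have hpos : ∀ t ∈ Ico (0 : ℝ) 1, 0 < powerSum (hypCoeff a) t := fun t ht =>
    (sub_pos.2 ht.2).trans_le (one_sub_le_powerSum_hypCoeff ha0 ha ht.1 ht.2)
  have hd : ∀ t ∈ Ico (0 : ℝ) 1, HasDerivAt
      (fun t => powerSum (hypCoeff (1 / 2)) (1 - (1 - t) ^ p) / powerSum (hypCoeff a) t)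
      ((powerSum (derivCoeff (hypCoeff (1 / 2))) (1 - (1 - t) ^ p) * (p * (1 - t) ^ p / (1 - t))
        * powerSum (hypCoeff a) t
      - powerSum (hypCoeff (1 / 2)) (1 - (1 - t) ^ p) * powerSum (derivCoeff (hypCoeff a)) t)
        / powerSum (hypCoeff a) t ^ 2) t := fun t ht =>
    (hasDerivAt_powerSum_comp (polyGrowth_hypCoeff (by norm_num)) hp0 ht).div
      ((polyGrowth_hypCoeff ha).hasDerivAt (by rw [abs_of_nonneg ht.1]; exact ht.2))
      (hpos t ht).ne'
  have h := strictAntiOn_of_deriv_neg (convex_Ico (0 : ℝ) 1)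
    (fun t ht => (hd t ht).continuousAt.continuousWithinAt)
    (fun t ht => by
      rw [interior_Ico] at ht
      have ht' : t ∈ Ico (0 : ℝ) 1 := ⟨ht.1.le, ht.2⟩
      rw [(hd t ht').deriv]
      exact div_neg_of_neg_of_pos
        ((pos_iff_neg_of_mul_neg (hypWronskian_neg ha0 ha hp0 hp1 hap ht)).1 ht.1)
        (pow_pos (hpos t ht') 2))
    (left_mem_Ico.2 one_pos) ⟨ht.1.le, ht.2⟩ ht.1
  simp only [sub_zero, one_rpow, sub_self, powerSum_hypCoeff_at_zero, div_one] at h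
  rwa [div_lt_one (hpos t ⟨ht.1.le, ht.2⟩)] at h

theorem four_mul_sq_le_of_powerSum_comp_lt (ha : a ^ 2 ≤ 1) (hp0 : 0 < p)
    (h : ∀ t ∈ Ioo (0 : ℝ) 1,
      powerSum (hypCoeff (1 / 2)) (1 - (1 - t) ^ p) < powerSum (hypCoeff a) t) :
    4 * a ^ 2 ≤ p := by
  have h0 : (0 : ℝ) ∈ Ico (0 : ℝ) 1 := left_mem_Ico.2 one_pos
  have hd := ((polyGrowth_hypCoeff ha).hasDerivAt (t := 0) (by simp)).sub
    (hasDerivAt_powerSum_comp (polyGrowth_hypCoeff (a := 1 / 2) (by norm_num)) hp0 h0)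
  simp only [sub_zero, one_rpow, sub_self, powerSum_derivCoeff_hypCoeff_at_zero] at hd
  have hlim := (hasDerivAt_iff_tendsto_slope.1 hd).mono_left
    (nhdsWithin_mono (0 : ℝ) fun t (ht : t ∈ Ioi (0 : ℝ)) => ht.ne')
  have hnn := ge_of_tendsto (b := 0) hlim (by
    filter_upwards [Ioo_mem_nhdsGT (one_pos : (0 : ℝ) < 1)] with t ht
    have := h t ht
    simp only [slope_def_field, Pi.sub_apply, sub_zero, one_rpow, sub_self,
      powerSum_hypCoeff_at_zero]
    exact div_nonneg (by linarith) ht.1.le)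
  linarith

end Comparison

theorem stmt17 (c d : ℝ) (hc : 0 < c) (hd : 0 < d) (hcd : c / d ≤ 5 / 6) :
    sSup {δ : ℝ | δ ∈ Ioo (-(1/2) : ℝ) 0 ∧ ∀ x ∈ Ioo (0:ℝ) 1,
        hyp (-(1/2)) (1/2) 1 (1 - x ^ c) < hyp (-(1/2) - δ) (1/2 + δ) 1 (1 - x ^ d)}
      = (Real.sqrt (c / d) - 1) / 2 := by
  have hp0 : 0 < c / d := div_pos hc hd
  have hp1 : c / d < 1 := by linarith
  have hsqrt := Real.sqrt_pos.2 hp0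
  have hsqrt1 : √(c / d) < 1 := by rwa [Real.sqrt_lt' one_pos, one_pow]
  have hset : {δ : ℝ | δ ∈ Ioo (-(1/2) : ℝ) 0 ∧ ∀ x ∈ Ioo (0:ℝ) 1,
        hyp (-(1/2)) (1/2) 1 (1 - x ^ c) < hyp (-(1/2) - δ) (1/2 + δ) 1 (1 - x ^ d)}
      = Ioc (-(1/2)) ((√(c / d) - 1) / 2) := by
    ext δ
    have hrew : ∀ x : ℝ, hyp (-(1/2) - δ) (1/2 + δ) 1 x = powerSum (hypCoeff (1/2 + δ)) x :=
      fun x => by rw [show -(1/2 : ℝ) - δ = -(1/2 + δ) by ring]; rfl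
    have hrew' : ∀ x : ℝ, hyp (-(1/2)) (1/2) 1 x = powerSum (hypCoeff (1/2)) x := fun x => rfl
    simp only [mem_ofPred_eq, hrew, hrew']
    have hiff : δ ∈ Ioo (-(1/2) : ℝ) 0 →
        (4 * (1/2 + δ) ^ 2 ≤ c / d ↔ δ ≤ (√(c / d) - 1) / 2) := fun hδ => by
      rw [show 4 * (1/2 + δ) ^ 2 = (1 + 2 * δ) ^ 2 by ring,
        ← Real.le_sqrt' (by linarith [hδ.1])]
      constructor <;> intro h <;> linarith
    constructor
    · rintro ⟨hδ, h⟩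
      refine ⟨hδ.1, (hiff hδ).1 ?_⟩
      refine four_mul_sq_le_of_powerSum_comp_lt (by nlinarith [hδ.1, hδ.2]) hp0 fun t ht => ?_
      have hy : 1 - t ∈ Ioo (0 : ℝ) 1 := ⟨sub_pos.2 ht.2, by linarith [ht.1]⟩
      have := h ((1 - t) ^ d⁻¹) (rpow_mem_Ioo (inv_pos.2 hd) hy)
      rw [← rpow_mul hy.1.le, ← rpow_mul hy.1.le, inv_mul_cancel₀ hd.ne', rpow_one,
        sub_sub_cancel] at this
      rwa [div_eq_inv_mul c d]
    · rintro ⟨hδ, h⟩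
      have hδ' : δ ∈ Ioo (-(1/2) : ℝ) 0 := ⟨hδ, by linarith⟩
      refine ⟨hδ', fun x hx => ?_⟩
      have hy := rpow_mem_Ioo hd hx
      have := powerSum_comp_lt (a := 1/2 + δ) (t := 1 - x ^ d) (by linarith)
        (by nlinarith [hδ'.2]) hp0 hp1 ((hiff hδ').2 h) ⟨sub_pos.2 hy.2, by linarith [hy.1]⟩
      rwa [sub_sub_cancel, ← rpow_mul hx.1.le, mul_div_cancel₀ c hd.ne'] at this
  rw [hset, csSup_Ioc (by linarith)]
end
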